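/- arXiv:1910.04472 — 2 statements merged into one kernel-verified Lean document; each statement's English description precedes it below -/
import Mathlib

section
/- Let q be a prime power, d an even positive integer, and k, n1, n2, t integers with k ≥ d, n1 ≥ k, n2 ≥ k, and 0 ≤ t ≤ n1 − k. Then A_q(n1 + n2, d, k) ≥ q^{n1·(k − d/2 + 1)} · A_q(n2, d, k) + A_q(n1 − t, d, k) · (1 + Σ_{r=d/2}^{k−d/2} A_r), where A_r = [k choose r]_q · Σ_{i=0}^{r−d/2} (−1)^i · q^{i(i−1)/2} · [r choose i]_q · (q^{(n2+t)·(r − d/2 + 1 − i)} − 1) is the number of codewords of rank r in a linear MRD code in F_q^{k×(n2+t)} with minimum rank distance d/2. -/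
open Module

/-- The subspace distance `d_S(U, W) = dim(U + W) − dim(U ∩ W)`. -/
noncomputable def subspaceDist {F : Type*} [Field F] {n : ℕ}
    (U W : Submodule F (Fin n → F)) : ℕ :=
  finrank F ↥(U ⊔ W) - finrank F ↥(U ⊓ W)

/-- `A_q(n, d, k)`: the maximum size of an `(n, M, d, k)_q` constant dimension code, i.e.
of a set of `k`-dimensional subspaces of `F_q^n` with pairwise subspace distance
at least `d`. -/
noncomputable def maxCDCSize (F : Type*) [Field F] [Fintype F] (n d k : ℕ) : ℕ :=
  sSup {M | ∃ C : Finset (Submodule F (Fin n → F)), C.card = M ∧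
    (∀ U ∈ C, finrank F ↥U = k) ∧
    ∀ U ∈ C, ∀ W ∈ C, U ≠ W → d ≤ subspaceDist U W}

/-- The Gaussian binomial coefficient
`[a choose b]_q = ∏_{j=0}^{b−1} (q^{a−j} − 1)/(q^{b−j} − 1)` for `0 ≤ b ≤ a`,
and `0` otherwise. -/
noncomputable def gaussBinom (q : ℚ) (a b : ℕ) : ℚ :=
  if b ≤ a then ∏ j ∈ Finset.range b, (q ^ (a - j) - 1) / (q ^ (b - j) - 1) else 0

/-- The product `∏_{j<b} (q^{j+1} − 1)` never vanishes for `q > 1`. -/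
lemma prod_pow_sub_one_ne_zero {q : ℚ} (hq : 1 < q) (b : ℕ) :
    ∏ j ∈ Finset.range b, (q ^ (j + 1) - 1) ≠ 0 :=
  Finset.prod_ne_zero_iff.2 fun j _ => (sub_pos.2 (one_lt_pow₀ hq j.succ_ne_zero)).ne'

lemma gaussBinom_eq_div (q : ℚ) (a b : ℕ) :
    gaussBinom q a b =
      (∏ j ∈ Finset.range b, (q ^ (a - j) - 1)) / ∏ j ∈ Finset.range b, (q ^ (j + 1) - 1) := by
  unfold gaussBinom
  split_ifs with h
  · rw [Finset.prod_div_distrib, ← Finset.prod_range_reflect (fun j => q ^ (j + 1) - 1)]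
    congr 1
    refine Finset.prod_congr rfl fun j hj => ?_
    rw [Finset.mem_range] at hj
    congr 2
    omega
  · rw [Finset.prod_eq_zero (Finset.mem_range.2 (not_le.1 h)) (by simp), zero_div]

lemma gaussBinom_zero_right (q : ℚ) (a : ℕ) : gaussBinom q a 0 = 1 := by
  simp [gaussBinom]

lemma gaussBinom_eq_zero {q : ℚ} {a b : ℕ} (h : a < b) : gaussBinom q a b = 0 :=
  if_neg (not_le.2 h)

/-- The `q`-Pascal rule. -/
lemma gaussBinom_succ_succ {q : ℚ} (hq : 1 < q) (a b : ℕ) :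
    gaussBinom q (a + 1) (b + 1) = gaussBinom q a b + q ^ (b + 1) * gaussBinom q a (b + 1) := by
  rcases lt_or_ge a b with h | h
  · simp [gaussBinom_eq_zero, h, Nat.lt_succ_of_lt h]
  have h0 := prod_pow_sub_one_ne_zero hq b
  have h1 : q ^ (b + 1) - 1 ≠ 0 := (sub_pos.2 (one_lt_pow₀ hq b.succ_ne_zero)).ne'
  have h2 : q ^ (b + 1) * q ^ (a - b) = q ^ (a + 1) := by
    rw [← pow_add]; congr 1; omega
  simp only [gaussBinom_eq_div]
  rw [Finset.prod_range_succ' (fun j => q ^ (a + 1 - j) - 1)]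
  simp only [Nat.add_sub_add_right, Finset.prod_range_succ (n := b), Nat.sub_zero]
  field_simp
  linear_combination (-∏ x ∈ Finset.range b, (q ^ (a - x) - 1)) * h2

lemma prod_pow_sub_one_mul (q : ℚ) {a b : ℕ} (h : b ≤ a) :
    (∏ j ∈ Finset.range b, (q ^ (a - j) - 1)) * ∏ j ∈ Finset.range (a - b), (q ^ (j + 1) - 1) =
      ∏ j ∈ Finset.range a, (q ^ (j + 1) - 1) := by
  induction b with
  | zero => simp
  | succ b ih =>
    rw [← ih (by omega), Finset.prod_range_succ, show a - b = a - (b + 1) + 1 by omega,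
      Finset.prod_range_succ (n := a - (b + 1))]
    ring

lemma gaussBinom_symm {q : ℚ} (hq : 1 < q) {a b : ℕ} (h : b ≤ a) :
    gaussBinom q a (a - b) = gaussBinom q a b := by
  have h0 := prod_pow_sub_one_ne_zero hq b
  have h1 := prod_pow_sub_one_ne_zero hq (a - b)
  rw [gaussBinom_eq_div, gaussBinom_eq_div, div_eq_div_iff h1 h0, prod_pow_sub_one_mul q h,
    ← prod_pow_sub_one_mul q (Nat.sub_le a b), Nat.sub_sub_self h]

/-- The alternating sum `∑ (−1)^i q^{i(i−1)/2} [n choose i]_q` vanishes for `n > 0`. -/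
lemma sum_gaussBinom_alternating {q : ℚ} (hq : 1 < q) {n r : ℕ} (h : n ≤ r) :
    ∑ i ∈ Finset.range (r + 1), (-1 : ℚ) ^ i * q ^ (i * (i - 1) / 2) * gaussBinom q n i =
      if n = 0 then 1 else 0 := by
  rcases n with _ | n
  · rw [if_pos rfl, Finset.sum_eq_single 0]
    · simp [gaussBinom_zero_right]
    · intro i _ hi
      rw [gaussBinom_eq_zero (Nat.pos_of_ne_zero hi), mul_zero]
    · simp
  · rw [if_neg n.succ_ne_zero]
    have key : ∀ R : ℕ, ∑ i ∈ Finset.range (R + 1),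
        (-1 : ℚ) ^ i * q ^ (i * (i - 1) / 2) * gaussBinom q (n + 1) i =
          (-1) ^ R * q ^ ((R + 1) * R / 2) * gaussBinom q n R := by
      intro R
      induction R with
      | zero => simp [gaussBinom_zero_right]
      | succ R ih =>
        have e : (R + 1 + 1) * (R + 1) / 2 = (R + 1) * R / 2 + (R + 1) := by
          rw [show (R + 1 + 1) * (R + 1) = (R + 1) * R + (R + 1) * 2 by ring,
            Nat.add_mul_div_right _ _ two_pos]
        rw [Finset.sum_range_succ, ih, gaussBinom_succ_succ hq, e, pow_add q, Nat.add_sub_cancel]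
        ring
    rw [key, gaussBinom_eq_zero (by omega), mul_zero]

section
variable {F V : Type*} [Field F] [AddCommGroup V] [Module F V]

/-- Linearly independent families of length `b` spanning a given `b`-dimensional subspace `W`
are the linearly independent families of length `b` in `W`. -/
lemma card_linearIndependent_span_eq [Finite V] {b : ℕ} (W : Submodule F V)
    (hW : finrank F W = b) :
    Nat.card {s : {s : Fin b → V // LinearIndependent F s} //
      Submodule.span F (Set.range s.1) = W} =
      Nat.card {s : Fin b → W // LinearIndependent F s} := by
  symm
  refine Nat.card_congr (Equiv.ofBijective
    (fun s => ⟨⟨W.subtype ∘ s.1, s.2.map' W.subtype W.ker_subtype⟩, ?_⟩) ⟨?_, ?_⟩)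
  · rw [Set.range_comp, ← Submodule.map_span,
      s.2.span_eq_top_of_card_eq_finrank' (by simp [hW]), Submodule.map_subtype_top]
  · rintro ⟨s, hs⟩ ⟨s', hs'⟩ h
    simp only [Subtype.mk.injEq] at h ⊢
    exact W.injective_subtype.comp_left h
  · rintro ⟨⟨s, hs⟩, h⟩
    have hm : ∀ i, s i ∈ W := fun i => h ▸ Submodule.subset_span (Set.mem_range_self i)
    exact ⟨⟨fun i => ⟨s i, hm i⟩, LinearIndependent.of_comp W.subtype hs⟩, rfl⟩

lemma card_linearIndependent_cast [Fintype F] [Finite V] {b : ℕ} (hb : b ≤ finrank F V) :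
    (Nat.card {s : Fin b → V // LinearIndependent F s} : ℚ) =
      (∏ i ∈ Finset.range b, (Fintype.card F : ℚ) ^ i) *
        ∏ j ∈ Finset.range b, ((Fintype.card F : ℚ) ^ (finrank F V - j) - 1) := by
  rw [card_linearIndependent hb, Fin.prod_univ_eq_prod_range
    (fun i => Fintype.card F ^ finrank F V - Fintype.card F ^ i) b, Nat.cast_prod,
    ← Finset.prod_mul_distrib]
  refine Finset.prod_congr rfl fun j hj => ?_
  rw [Finset.mem_range] at hj
  rw [Nat.cast_sub (Nat.pow_le_pow_right Fintype.card_pos (by omega)), mul_sub, mul_one, ← pow_add,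
    Nat.add_sub_cancel' (by omega)]
  push_cast
  rfl

/-- The Gaussian binomial coefficient counts the subspaces of a given dimension. -/
lemma card_submodule_finrank_eq [Fintype F] [Finite V] (b : ℕ) :
    (Nat.card {W : Submodule F V // finrank F W = b} : ℚ) =
      gaussBinom (Fintype.card F) (finrank F V) b := by
  have hq : (1 : ℚ) < Fintype.card F := by exact_mod_cast Fintype.one_lt_card
  rcases lt_or_ge (finrank F V) b with hb | hb
  · rw [gaussBinom_eq_zero hb]
    have : IsEmpty {W : Submodule F V // finrank F W = b} :=
      ⟨fun W => by have := W.1.finrank_le; have := W.2; omega⟩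
    simp
  let f : {s : Fin b → V // LinearIndependent F s} → {W : Submodule F V // finrank F W = b} :=
    fun s => ⟨Submodule.span F (Set.range s.1), by simp [finrank_span_eq_card s.2]⟩
  have key : (Nat.card {s : Fin b → V // LinearIndependent F s} : ℚ) =
      Nat.card {W : Submodule F V // finrank F W = b} *
        ((∏ i ∈ Finset.range b, (Fintype.card F : ℚ) ^ i) *
          ∏ j ∈ Finset.range b, ((Fintype.card F : ℚ) ^ (b - j) - 1)) := by
    have := Fintype.ofFinite {W : Submodule F V // finrank F W = b}
    rw [← Nat.card_congr (Equiv.sigmaFiberEquiv f), Nat.card_sigma, Nat.cast_sum,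
      Nat.card_eq_fintype_card, ← nsmul_eq_mul, ← Finset.card_univ, ← Finset.sum_const]
    refine Finset.sum_congr rfl fun W _ => ?_
    have h1 : Nat.card {s // f s = W} = Nat.card {s : Fin b → W.1 // LinearIndependent F s} := by
      rw [← card_linearIndependent_span_eq W.1 W.2]
      exact Nat.card_congr (Equiv.subtypeEquivRight fun s => by simp [f, Subtype.ext_iff])
    rw [h1, card_linearIndependent_cast W.2.ge, W.2]
  have hP : ∏ i ∈ Finset.range b, (Fintype.card F : ℚ) ^ i ≠ 0 :=
    Finset.prod_ne_zero_iff.2 fun i _ => pow_ne_zero _ (by positivity)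
  have hQ := prod_pow_sub_one_ne_zero hq b
  have hr : ∏ j ∈ Finset.range b, ((Fintype.card F : ℚ) ^ (b - j) - 1) =
      ∏ j ∈ Finset.range b, ((Fintype.card F : ℚ) ^ (j + 1) - 1) := by
    simpa using prod_pow_sub_one_mul (Fintype.card F : ℚ) le_rfl (b := b)
  rw [card_linearIndependent_cast hb, hr] at key
  rw [gaussBinom_eq_div, eq_div_iff hQ]
  refine mul_left_cancel₀ hP ?_
  linear_combination -key

lemma finrank_comap_mkQ [FiniteDimensional F V] (p : Submodule F V) (W : Submodule F (V ⧸ p)) :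
    finrank F (W.comap p.mkQ) = finrank F p + finrank F W := by
  have h1 := LinearMap.finrank_range_add_finrank_ker (W.mkQ ∘ₗ p.mkQ)
  rw [LinearMap.range_eq_top.2
    (by simpa using W.mkQ_surjective.comp p.mkQ_surjective), finrank_top,
    LinearMap.ker_comp, Submodule.ker_mkQ] at h1
  have h2 := W.finrank_quotient_add_finrank
  have h3 := p.finrank_quotient_add_finrank
  omega

/-- The number of subspaces of dimension `dim S + i` between `S` and `K`. -/
lemma card_submodule_between [Fintype F] [Finite V] {S K : Submodule F V} (h : S ≤ K) (i : ℕ) :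
    (Nat.card {T : Submodule F V // (S ≤ T ∧ T ≤ K) ∧ finrank F T = finrank F S + i} : ℚ) =
      gaussBinom (Fintype.card F) (finrank F K - finrank F S) i := by
  set p := S.comap K.subtype
  have hp : finrank F p = finrank F S := (Submodule.comapSubtypeEquivOfLe h).finrank_eq
  have hQ : finrank F (K ⧸ p) = finrank F K - finrank F S := by
    have := p.finrank_quotient_add_finrank
    omega
  have : Finite (K ⧸ p) := .of_surjective _ p.mkQ_surjective
  rw [← hQ, ← card_submodule_finrank_eq]
  norm_cast
  symm
  refine Nat.card_congr (Equiv.ofBijective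
    (fun W => ⟨(W.1.comap p.mkQ).map K.subtype, ⟨⟨?_, K.map_subtype_le _⟩, ?_⟩⟩) ⟨?_, ?_⟩)
  · rw [← inf_eq_right.2 h, ← Submodule.map_comap_subtype]
    exact Submodule.map_mono (p.le_comap_mkQ _)
  · rw [Submodule.finrank_map_subtype_eq, finrank_comap_mkQ, hp, W.2]
  · rintro ⟨W, hW⟩ ⟨W', hW'⟩ h
    simp only [Subtype.mk.injEq] at h ⊢
    exact Submodule.comap_injective_of_surjective p.mkQ_surjective
      (Submodule.map_injective_of_injective K.injective_subtype h)
  · rintro ⟨T, ⟨hST, hTK⟩, hT⟩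
    have e : (((T.comap K.subtype).map p.mkQ).comap p.mkQ).map K.subtype = T := by
      rw [Submodule.comap_map_mkQ, sup_eq_right.2 (Submodule.comap_mono hST),
        Submodule.map_comap_subtype, inf_eq_right.2 hTK]
    refine ⟨⟨(T.comap K.subtype).map p.mkQ, ?_⟩, Subtype.ext e⟩
    have := congrArg (fun T : Submodule F V => finrank F T) e
    simp only [Submodule.finrank_map_subtype_eq, finrank_comap_mkQ] at this
    omega

lemma exists_le_finrank_eq [FiniteDimensional F V] (S : Submodule F V) {k : ℕ}
    (h : finrank F S ≤ k) (hk : k ≤ finrank F V) :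
    ∃ T : Submodule F V, S ≤ T ∧ finrank F T = k := by
  have h1 := S.finrank_quotient_add_finrank
  obtain ⟨v, hv⟩ := exists_linearIndependent_of_le_finrank
    (R := F) (M := V ⧸ S) (n := k - finrank F S) (by omega)
  refine ⟨(Submodule.span F (Set.range v)).comap S.mkQ, S.le_comap_mkQ _, ?_⟩
  rw [finrank_comap_mkQ, finrank_span_eq_card hv, Fintype.card_fin]
  omega

end

section
variable {F A B D : Type*} [Field F] [AddCommGroup A] [Module F A] [AddCommGroup B] [Module F B]
  [AddCommGroup D] [Module F D]

/-- In a linear MRD code, the number of codewords vanishing on a subspace `S` depends only on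
the dimension of `S`. -/
lemma card_vanishing [Fintype F] [Finite A] [Finite B] [Finite D]
    (Λ : D →ₗ[F] A →ₗ[F] B) {κ : ℕ} (hκ : κ ≤ finrank F A)
    (hD : finrank F D = finrank F B * κ)
    (hΛ : ∀ c, c ≠ 0 → finrank F (LinearMap.ker (Λ c)) < κ) (S : Submodule F A) :
    Nat.card {c : D // S ≤ LinearMap.ker (Λ c)} =
      Fintype.card F ^ (finrank F B * (κ - finrank F S)) := by
  let ρ (T : Submodule F A) : D →ₗ[F] T →ₗ[F] B := LinearMap.lcomp F B T.subtype ∘ₗ Λ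
  have hρ (T : Submodule F A) (c : D) : c ∈ LinearMap.ker (ρ T) ↔ T ≤ LinearMap.ker (Λ c) := by
    simp only [ρ, LinearMap.mem_ker, LinearMap.ext_iff, SetLike.le_def]
    simp
  have hbot (T : Submodule F A) (hT : κ ≤ finrank F T) : LinearMap.ker (ρ T) = ⊥ := by
    refine (Submodule.eq_bot_iff _).2 fun c hc => by_contra fun h0 => ?_
    have := Submodule.finrank_mono ((hρ T c).1 hc)
    have := hΛ c h0
    omega
  have hcard : Nat.card {c : D // S ≤ LinearMap.ker (Λ c)} =
      Fintype.card F ^ finrank F (LinearMap.ker (ρ S)) := by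
    rw [← Nat.card_eq_fintype_card, ← Module.natCard_eq_pow_finrank]
    exact Nat.card_congr (Equiv.subtypeEquivRight fun c => (hρ S c).symm)
  rw [hcard]
  congr 1
  rcases le_total κ (finrank F S) with h | h
  · rw [hbot S h, finrank_bot, Nat.sub_eq_zero_of_le h, mul_zero]
  obtain ⟨T, hST, hT⟩ := exists_le_finrank_eq S h hκ
  have hsurjT : Function.Surjective (ρ T) := by
    refine (LinearMap.injective_iff_surjective_of_finrank_eq_finrank ?_).1
      (LinearMap.ker_eq_bot.1 (hbot T hT.ge))
    rw [hD, Module.finrank_linearMap, hT, mul_comm]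
  have hsurj : LinearMap.range (ρ S) = ⊤ := by
    refine LinearMap.range_eq_top.2 fun g => ?_
    obtain ⟨g', rfl⟩ := g.exists_extend
    obtain ⟨c, hc⟩ := hsurjT (g' ∘ₗ T.subtype)
    refine ⟨c, LinearMap.ext fun x => ?_⟩
    exact LinearMap.congr_fun hc ⟨x, hST x.2⟩
  have := LinearMap.finrank_range_add_finrank_ker (ρ S)
  rw [hsurj, finrank_top, Module.finrank_linearMap, hD] at this
  rw [Nat.mul_sub, mul_comm _ (finrank F S)]
  omega

open Classical in
/-- Möbius inversion: the number of codewords of a linear MRD code with a prescribed kernel. -/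
lemma card_ker_eq [Fintype F] [Finite A] [Finite B] [Finite D]
    (Λ : D →ₗ[F] A →ₗ[F] B) {κ : ℕ} (hκ : κ ≤ finrank F A)
    (hD : finrank F D = finrank F B * κ)
    (hΛ : ∀ c, c ≠ 0 → finrank F (LinearMap.ker (Λ c)) < κ) (S : Submodule F A) {r : ℕ}
    (hr : finrank F S + r = finrank F A) :
    (Nat.card {c : D // LinearMap.ker (Λ c) = S} : ℚ) =
      ∑ i ∈ Finset.range (r + 1), (-1 : ℚ) ^ i * (Fintype.card F : ℚ) ^ (i * (i - 1) / 2) *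
        gaussBinom (Fintype.card F) r i *
          (Fintype.card F : ℚ) ^ (finrank F B * (κ - (finrank F S + i))) := by
  have hq : (1 : ℚ) < Fintype.card F := by exact_mod_cast Fintype.one_lt_card
  have := Fintype.ofFinite D
  have := Fintype.ofFinite (Submodule F A)
  have h1 (i : ℕ) : gaussBinom (Fintype.card F) r i *
      (Fintype.card F : ℚ) ^ (finrank F B * (κ - (finrank F S + i))) =
      ∑ c : D, if S ≤ LinearMap.ker (Λ c) then
        gaussBinom (Fintype.card F) (finrank F (LinearMap.ker (Λ c)) - finrank F S) i else 0 := by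
    calc _ = ∑ T : Submodule F A, if S ≤ T ∧ finrank F T = finrank F S + i then
          (Fintype.card F : ℚ) ^ (finrank F B * (κ - (finrank F S + i))) else 0 := by
          rw [← Finset.sum_filter, Finset.sum_const, nsmul_eq_mul]
          have := card_submodule_between (le_top : S ≤ ⊤) i
          rw [finrank_top, ← hr, Nat.add_sub_cancel_left] at this
          rw [← this, Nat.card_eq_fintype_card, Fintype.card_subtype]
          simp
      _ = ∑ T : Submodule F A, ∑ c : D,
          if (S ≤ T ∧ T ≤ LinearMap.ker (Λ c)) ∧ finrank F T = finrank F S + i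
            then (1 : ℚ) else 0 := by
          refine Finset.sum_congr rfl fun T _ => ?_
          split_ifs with h
          · have := card_vanishing Λ hκ hD hΛ T
            rw [h.2, Nat.card_eq_fintype_card, Fintype.card_subtype] at this
            rw [Finset.sum_boole]
            simp only [h.1, h.2, true_and, and_true]
            rw [this]
            push_cast
            rfl
          · symm
            refine Finset.sum_eq_zero fun c _ => if_neg ?_
            tauto
      _ = _ := by
          rw [Finset.sum_comm]
          refine Finset.sum_congr rfl fun c _ => ?_
          split_ifs with h
          · rw [Finset.sum_boole, ← card_submodule_between h, Nat.card_eq_fintype_card,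
              Fintype.card_subtype]
          · refine Finset.sum_eq_zero fun T _ => if_neg ?_
            exact fun h' => h (h'.1.1.trans h'.1.2)
  simp_rw [mul_assoc _ (gaussBinom _ _ _), h1, Finset.mul_sum]
  rw [Finset.sum_comm, Nat.card_eq_fintype_card, Fintype.card_subtype, ← Finset.sum_boole]
  refine Finset.sum_congr rfl fun c _ => ?_
  by_cases h : S ≤ LinearMap.ker (Λ c)
  · simp only [if_pos h]
    have := (LinearMap.ker (Λ c)).finrank_le
    rw [sum_gaussBinom_alternating hq (by omega)]
    refine if_congr ?_ rfl rfl
    refine ⟨fun h' => by rw [h', Nat.sub_self], fun h' => ?_⟩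
    exact (Submodule.eq_of_le_of_finrank_le h (by omega)).symm
  · simp only [if_neg h, mul_zero, Finset.sum_const_zero]
    exact if_neg fun hS => h hS.ge

open Classical in
/-- Delsarte's formula for the rank distribution of a linear MRD code. -/
lemma card_finrank_ker_eq [Fintype F] [Finite A] [Finite B] [Finite D]
    (Λ : D →ₗ[F] A →ₗ[F] B) {δ : ℕ} (hδ0 : 0 < δ) (hδ : δ ≤ finrank F A)
    (hD : finrank F D = finrank F B * (finrank F A - δ + 1))
    (hΛ : ∀ c, c ≠ 0 → finrank F (LinearMap.ker (Λ c)) < finrank F A - δ + 1) {r : ℕ}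
    (hδr : δ ≤ r) (hr : r ≤ finrank F A) :
    (Nat.card {c : D // finrank F (LinearMap.ker (Λ c)) + r = finrank F A} : ℚ) =
      gaussBinom (Fintype.card F) (finrank F A) r *
        ∑ i ∈ Finset.range (r - δ + 1),
          (-1 : ℚ) ^ i * (Fintype.card F : ℚ) ^ (i * (i - 1) / 2) *
            gaussBinom (Fintype.card F) r i *
              ((Fintype.card F : ℚ) ^ (finrank F B * (r - δ + 1 - i)) - 1) := by
  have hq : (1 : ℚ) < Fintype.card F := by exact_mod_cast Fintype.one_lt_card
  have := Fintype.ofFinite D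
  have := Fintype.ofFinite (Submodule F A)
  have h1 (S : Submodule F A) (hS : finrank F S = finrank F A - r) :
      (Nat.card {c : D // LinearMap.ker (Λ c) = S} : ℚ) =
      ∑ i ∈ Finset.range (r - δ + 1),
          (-1 : ℚ) ^ i * (Fintype.card F : ℚ) ^ (i * (i - 1) / 2) *
            gaussBinom (Fintype.card F) r i *
              ((Fintype.card F : ℚ) ^ (finrank F B * (r - δ + 1 - i)) - 1) := by
    have h0 := sum_gaussBinom_alternating hq (le_refl r)
    rw [if_neg (by omega)] at h0
    rw [card_ker_eq Λ (by omega) hD hΛ S (r := r) (by omega), ← sub_zero (Finset.sum _ _), ← h0,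
      ← Finset.sum_sub_distrib]
    symm
    refine Finset.sum_subset_zero_on_sdiff (Finset.range_mono (by omega)) ?_ ?_
    · intro i hi
      simp only [Finset.mem_sdiff, Finset.mem_range] at hi
      rw [show finrank F A - δ + 1 - (finrank F S + i) = 0 by omega]
      simp
    · intro i _
      rw [show finrank F A - δ + 1 - (finrank F S + i) = r - δ + 1 - i by omega]
      ring
  rw [← gaussBinom_symm hq hr, ← card_submodule_finrank_eq, Nat.card_eq_fintype_card,
    Fintype.card_subtype, ← nsmul_eq_mul, Nat.card_eq_fintype_card, Fintype.card_subtype,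
    ← Finset.sum_const]
  rw [Finset.card_eq_sum_card_fiberwise (f := fun c => LinearMap.ker (Λ c))
    (t := Finset.univ.filter fun S : Submodule F A => finrank F S = finrank F A - r)
    (fun c hc => by simp at hc ⊢; omega), Nat.cast_sum]
  refine Finset.sum_congr rfl fun S hS => ?_
  simp only [Finset.mem_filter, Finset.mem_univ, true_and] at hS
  rw [← h1 S hS, Nat.card_eq_fintype_card, Fintype.card_subtype, Finset.filter_filter]
  congr 2
  ext c
  simp only [Finset.mem_filter, Finset.mem_univ, true_and]
  refine ⟨fun h => h.2, fun h => ⟨by rw [h]; omega, h⟩⟩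

/-- The codewords of rank at most `k − δ` in a linear MRD code, where `k = dim A`. -/
lemma sum_rank_distribution_le_card [Fintype F] [Finite A] [Finite B] [Finite D]
    (Λ : D →ₗ[F] A →ₗ[F] B) {δ : ℕ} (hδ0 : 0 < δ) (hδ : δ ≤ finrank F A)
    (hD : finrank F D = finrank F B * (finrank F A - δ + 1))
    (hΛ : ∀ c, c ≠ 0 → finrank F (LinearMap.ker (Λ c)) < finrank F A - δ + 1) :
    1 + ∑ r ∈ Finset.Icc δ (finrank F A - δ), gaussBinom (Fintype.card F) (finrank F A) r *
        ∑ i ∈ Finset.range (r - δ + 1),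
          (-1 : ℚ) ^ i * (Fintype.card F : ℚ) ^ (i * (i - 1) / 2) *
            gaussBinom (Fintype.card F) r i *
              ((Fintype.card F : ℚ) ^ (finrank F B * (r - δ + 1 - i)) - 1) ≤
      Nat.card {c : D // δ ≤ finrank F (LinearMap.ker (Λ c))} := by
  classical
  have := Fintype.ofFinite D
  have h1 : ∀ r ∈ Finset.Icc δ (finrank F A - δ), gaussBinom (Fintype.card F) (finrank F A) r *
        ∑ i ∈ Finset.range (r - δ + 1),
          (-1 : ℚ) ^ i * (Fintype.card F : ℚ) ^ (i * (i - 1) / 2) *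
            gaussBinom (Fintype.card F) r i *
              ((Fintype.card F : ℚ) ^ (finrank F B * (r - δ + 1 - i)) - 1) =
      ((Finset.univ.filter fun c : D =>
        finrank F (LinearMap.ker (Λ c)) + r = finrank F A).card : ℚ) := by
    intro r hr
    rw [Finset.mem_Icc] at hr
    rw [← card_finrank_ker_eq Λ hδ0 hδ hD hΛ hr.1 (by omega), Nat.card_eq_fintype_card,
      Fintype.card_subtype]
  have hz : finrank F (LinearMap.ker (Λ 0)) = finrank F A := by
    rw [map_zero, LinearMap.ker_zero, finrank_top]
  rw [Finset.sum_congr rfl h1, Nat.card_eq_fintype_card, Fintype.card_subtype]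
  norm_cast
  rw [← Finset.card_biUnion, ← Finset.card_singleton (0 : D), ← Finset.card_union_of_disjoint]
  · refine Finset.card_le_card fun c hc => ?_
    simp only [Finset.mem_union, Finset.mem_singleton, Finset.mem_biUnion, Finset.mem_filter,
      Finset.mem_univ, true_and, Finset.mem_Icc] at hc ⊢
    rcases hc with rfl | ⟨r, hr, h⟩
    · omega
    · omega
  · simp only [Finset.disjoint_singleton_left, Finset.mem_biUnion, Finset.mem_filter,
      Finset.mem_univ, true_and, Finset.mem_Icc]
    rintro ⟨r, hr, h⟩
    omega
  · intro r _ r' _ hrr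
    refine Finset.disjoint_left.2 fun c hc hd => hrr ?_
    simp only [Finset.mem_filter, Finset.mem_univ, true_and] at hc hd
    omega

end

/-- The `F`-bilinear map sending coefficients `c` and a point `x` to the value `∑ c_i x^{q^i}` of
a linearized polynomial. -/
noncomputable def linearizedEval (F K : Type*) [Field F] [Fintype F] [Field K] [Algebra F K]
    (κ : ℕ) : (Fin κ → K) →ₗ[F] K →ₗ[F] K :=
  LinearMap.mk₂ F (fun c x => ∑ i, c i * (FiniteField.frobeniusAlgHom F K ^ (i : ℕ)) x)
    (fun c c' x => by simp only [Pi.add_apply, add_mul, Finset.sum_add_distrib])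
    (fun a c x => by simp only [Pi.smul_apply, smul_mul_assoc, Finset.smul_sum])
    (fun c x y => by simp only [map_add, mul_add, Finset.sum_add_distrib])
    (fun a c x => by simp only [map_smul, mul_smul_comm, Finset.smul_sum])

lemma linearizedEval_apply {F K : Type*} [Field F] [Fintype F] [Field K] [Algebra F K]
    {κ : ℕ} (c : Fin κ → K) (x : K) :
    linearizedEval F K κ c x = ∑ i, c i * x ^ Fintype.card F ^ (i : ℕ) := by
  simp only [linearizedEval, LinearMap.mk₂_apply]
  refine Finset.sum_congr rfl fun i _ => ?_
  rw [AlgHom.coe_pow, FiniteField.coe_frobeniusAlgHom, pow_iterate]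

open Polynomial Classical in
lemma finrank_ker_linearizedEval_lt {F K : Type*} [Field F] [Fintype F] [Field K] [Algebra F K]
    [Finite K] {κ : ℕ} {c : Fin κ → K} (hc : c ≠ 0) :
    finrank F (LinearMap.ker (linearizedEval F K κ c)) < κ := by
  have hq : 1 < Fintype.card F := Fintype.one_lt_card
  obtain ⟨i, hi⟩ := Function.ne_iff.1 hc
  let P : K[X] := ∑ i, C (c i) * X ^ Fintype.card F ^ (i : ℕ)
  have hP : P ≠ 0 := by
    intro h
    apply hi
    have := congrArg (fun Q : K[X] => Q.coeff (Fintype.card F ^ (i : ℕ))) h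
    simpa [P, coeff_X_pow, (Nat.pow_right_injective hq).eq_iff, Fin.val_inj] using this
  have hdeg : P.natDegree ≤ Fintype.card F ^ (κ - 1) := by
    refine natDegree_sum_le_of_forall_le _ _ fun j _ => (natDegree_C_mul_X_pow_le _ _).trans ?_
    exact Nat.pow_le_pow_right hq.le (by have := j.2; omega)
  have hroots : (LinearMap.ker (linearizedEval F K κ c) : Set K) ⊆
      P.roots.toFinset := by
    intro x hx
    rw [SetLike.mem_coe, LinearMap.mem_ker, linearizedEval_apply] at hx
    rw [Finset.mem_coe, Multiset.mem_toFinset, mem_roots hP, IsRoot.def]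
    simpa [P, eval_finsetSum] using hx
  have h1 := Set.ncard_le_ncard hroots
  have h2 : Nat.card (LinearMap.ker (linearizedEval F K κ c)) ≤ Fintype.card F ^ (κ - 1) := by
    refine h1.trans (le_trans ?_ hdeg)
    rw [Set.ncard_coe_finset]
    exact (Multiset.toFinset_card_le _).trans P.card_roots'
  rw [Module.natCard_eq_pow_finrank (K := F), Nat.card_eq_fintype_card,
    Nat.pow_le_pow_iff_right hq] at h2
  have := i.2
  omega

/-- Gabidulin codes: linear MRD codes exist for all parameters. -/
lemma exists_linear_mrd (F A B : Type*) [Field F] [Fintype F] [AddCommGroup A] [Module F A]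
    [AddCommGroup B] [Module F B] [FiniteDimensional F A] [FiniteDimensional F B]
    (hB : 0 < finrank F B) (hAB : finrank F A ≤ finrank F B) (κ : ℕ) :
    ∃ Λ : (Fin κ → B) →ₗ[F] A →ₗ[F] B, ∀ c, c ≠ 0 → finrank F (LinearMap.ker (Λ c)) < κ := by
  obtain ⟨p, hp⟩ := CharP.exists F
  have : Fact p.Prime := ⟨CharP.char_is_prime F p⟩
  have : NeZero (finrank F B) := ⟨hB.ne'⟩
  let K := FiniteField.Extension F p (finrank F B)
  have hK : finrank F K = finrank F B := FiniteField.finrank_extension F p _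
  let e : B ≃ₗ[F] K := LinearEquiv.ofFinrankEq _ _ hK.symm
  obtain ⟨v, hv⟩ := exists_linearIndependent_of_le_finrank (hAB.trans hK.ge)
  let ι : A →ₗ[F] K := Finsupp.linearCombination F v ∘ₗ (finBasis F A).repr.toLinearMap
  have hι : Function.Injective ι :=
    Function.Injective.comp (g := Finsupp.linearCombination F v) hv (finBasis F A).repr.injective
  refine ⟨(LinearMap.lcomp F B ι ∘ₗ LinearMap.llcomp F K K B e.symm.toLinearMap) ∘ₗ
    linearizedEval F K κ ∘ₗ e.toLinearMap.compLeft (Fin κ), fun c hc => ?_⟩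
  have hec : e.toLinearMap.compLeft (Fin κ) c ≠ 0 := by
    intro h
    refine hc (funext fun i => e.injective ?_)
    rw [Pi.zero_apply, map_zero]
    exact congrFun h i
  refine lt_of_le_of_lt ?_ (finrank_ker_linearizedEval_lt (F := F) hec)
  rw [(Submodule.equivMapOfInjective ι hι _).finrank_eq]
  refine Submodule.finrank_mono (Submodule.map_le_iff_le_comap.2 fun x hx => ?_)
  exact (map_eq_zero_iff _ e.symm.injective).1 hx

section
variable {F : Type*} [Field F]

lemma bddAbove_cdc_card [Fintype F] (n d k : ℕ) :
    BddAbove {M | ∃ C : Finset (Submodule F (Fin n → F)), C.card = M ∧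
      (∀ U ∈ C, finrank F ↥U = k) ∧
      ∀ U ∈ C, ∀ W ∈ C, U ≠ W → d ≤ subspaceDist U W} := by
  have := Fintype.ofFinite (Submodule F (Fin n → F))
  refine ⟨Fintype.card (Submodule F (Fin n → F)), ?_⟩
  rintro _ ⟨C, rfl, -⟩
  exact C.card_le_univ

lemma two_mul_le_subspaceDist_iff {n k δ : ℕ} {U W : Submodule F (Fin n → F)}
    (hU : finrank F U = k) (hW : finrank F W = k) :
    2 * δ ≤ subspaceDist U W ↔ finrank F ↥(U ⊓ W) + δ ≤ k := by
  have h1 := Submodule.finrank_sup_add_finrank_inf_eq U W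
  have h2 := Submodule.finrank_mono (inf_le_left : U ⊓ W ≤ U)
  unfold subspaceDist
  omega

lemma exists_code_card_eq_maxCDCSize (F : Type*) [Field F] [Fintype F] (n δ k : ℕ) :
    ∃ C : Finset (Submodule F (Fin n → F)), C.card = maxCDCSize F n (2 * δ) k ∧
      (∀ U ∈ C, finrank F U = k) ∧
      ∀ U ∈ C, ∀ W ∈ C, U ≠ W → finrank F ↥(U ⊓ W) + δ ≤ k := by
  obtain ⟨C, hC, hk, hd⟩ := Nat.sSup_mem (by exact ⟨0, ∅, by simp⟩)
    (bddAbove_cdc_card (F := F) n (2 * δ) k)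
  exact ⟨C, hC, hk, fun U hU W hW hUW =>
    (two_mul_le_subspaceDist_iff (hk U hU) (hk W hW)).1 (hd U hU W hW hUW)⟩

/-- A family of `k`-dimensional subspaces of an `n`-dimensional space with pairwise small
intersections yields a lower bound for `A_q(n, 2δ, k)`. -/
lemma card_le_maxCDCSize [Fintype F] {ι E : Type*} [Finite ι] [AddCommGroup E] [Module F E]
    [FiniteDimensional F E] {n δ k : ℕ} (hE : finrank F E = n) (hδ : 0 < δ)
    (f : ι → Submodule F E) (hf : ∀ i, finrank F (f i) = k)
    (hd : ∀ i j, i ≠ j → finrank F ↥(f i ⊓ f j) + δ ≤ k) :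
    Nat.card ι ≤ maxCDCSize F n (2 * δ) k := by
  classical
  have := Fintype.ofFinite ι
  let e : E ≃ₗ[F] (Fin n → F) := LinearEquiv.ofFinrankEq _ _ (by simp [hE])
  let g : ι → Submodule F (Fin n → F) := fun i => (f i).map e.toLinearMap
  have hg (i) : finrank F (g i) = k := (e.finrank_map_eq (f i)).trans (hf i)
  have hgd (i j) (hij : i ≠ j) : finrank F ↥(g i ⊓ g j) + δ ≤ k := by
    have : g i ⊓ g j = (f i ⊓ f j).map e.toLinearMap :=
      (Submodule.map_inf _ e.injective).symm
    rw [this, e.finrank_map_eq]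
    exact hd i j hij
  have hinj : Function.Injective g := by
    intro i j hij
    by_contra h
    have := hgd i j h
    rw [← hij, inf_idem, hg] at this
    omega
  refine le_csSup (bddAbove_cdc_card n (2 * δ) k) ⟨Finset.univ.image g, ?_, ?_, ?_⟩
  · rw [Finset.card_image_of_injective _ hinj, Finset.card_univ, Nat.card_eq_fintype_card]
  · simpa using hg
  · simp only [Finset.mem_image, Finset.mem_univ, true_and]
    rintro _ ⟨i, rfl⟩ _ ⟨j, rfl⟩ hij
    exact (two_mul_le_subspaceDist_iff (hg i) (hg j)).2 (hgd i j (ne_of_apply_ne g hij))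

variable {A E P : Type*} [AddCommGroup A] [Module F A] [AddCommGroup E] [Module F E]
  [AddCommGroup P] [Module F P] [FiniteDimensional F A]

lemma finrank_range_inf_le [FiniteDimensional F P] (π : E →ₗ[F] P) (f f' : A →ₗ[F] E)
    (hf : Function.Injective (π ∘ₗ f)) :
    finrank F ↥(LinearMap.range f ⊓ LinearMap.range f') ≤
      finrank F ↥(LinearMap.range (π ∘ₗ f) ⊓ LinearMap.range (π ∘ₗ f')) := by
  let ρ := π.domRestrict (LinearMap.range f ⊓ LinearMap.range f')
  have hρ : Function.Injective ρ := by
    rintro ⟨_, ⟨a, rfl⟩, _⟩ ⟨_, ⟨b, rfl⟩, _⟩ h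
    have : a = b := hf h
    subst this
    rfl
  rw [← LinearMap.finrank_range_of_inj hρ]
  refine Submodule.finrank_mono ?_
  rintro _ ⟨⟨_, ⟨a, rfl⟩, ⟨b, hb⟩⟩, rfl⟩
  exact ⟨⟨a, rfl⟩, ⟨b, congrArg π hb⟩⟩

lemma finrank_range_inf_le_ker_sub (π : E →ₗ[F] P) (f f' : A →ₗ[F] E)
    (h : π ∘ₗ f = π ∘ₗ f') (hf : Function.Injective (π ∘ₗ f)) :
    finrank F ↥(LinearMap.range f ⊓ LinearMap.range f') ≤
      finrank F (LinearMap.ker (f - f')) := by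
  refine (Submodule.finrank_mono ?_).trans (Submodule.finrank_map_le f _)
  rintro _ ⟨⟨a, rfl⟩, ⟨b, hb⟩⟩
  have hab : b = a := hf ((LinearMap.congr_fun h b).trans (congrArg π hb))
  subst hab
  exact ⟨b, by simp [hb], rfl⟩

lemma finrank_range_inf_add_ker_le (π : E →ₗ[F] P) (f g : A →ₗ[F] E)
    (hf : Function.Injective (π ∘ₗ f)) (hg : Function.Injective g) :
    finrank F ↥(LinearMap.range f ⊓ LinearMap.range g) + finrank F (LinearMap.ker (π ∘ₗ g)) ≤
      finrank F A := by
  have hJ : finrank F ↥((LinearMap.ker (π ∘ₗ g)).map g) = finrank F (LinearMap.ker (π ∘ₗ g)) :=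
    (Submodule.equivMapOfInjective g hg _).finrank_eq.symm
  have hdisj : (LinearMap.range f ⊓ LinearMap.range g) ⊓ (LinearMap.ker (π ∘ₗ g)).map g = ⊥ := by
    refine (Submodule.eq_bot_iff _).2 ?_
    rintro _ ⟨⟨⟨a, rfl⟩, -⟩, ⟨b, hb, hba⟩⟩
    have : a = 0 := (map_eq_zero_iff _ hf).1 (by
      rw [LinearMap.comp_apply, ← hba]
      exact hb)
    rw [this, map_zero]
  have h1 := Submodule.finrank_sup_add_finrank_inf_eq
    (LinearMap.range f ⊓ LinearMap.range g) ((LinearMap.ker (π ∘ₗ g)).map g)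
  rw [hdisj, finrank_bot, hJ, add_zero] at h1
  rw [← h1, ← LinearMap.finrank_range_of_inj hg]
  exact Submodule.finrank_mono (sup_le inf_le_right LinearMap.map_le_range)

lemma exists_injective_range_eq [FiniteDimensional F P] (U : Submodule F P)
    (h : finrank F U = finrank F A) :
    ∃ φ : A →ₗ[F] P, Function.Injective φ ∧ LinearMap.range φ = U := by
  let e : A ≃ₗ[F] U := LinearEquiv.ofFinrankEq _ _ h.symm
  refine ⟨U.subtype ∘ₗ e.toLinearMap, U.injective_subtype.comp e.injective, ?_⟩
  rw [LinearMap.range_comp, LinearEquiv.range, Submodule.map_subtype_top]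

end

/-- The parallel linkage construction: lifting a constant dimension code in `Z` by an MRD code with
values in `X × Y`, and one in `X` by the low-rank codewords of an MRD code with values in
`Y × Z`. -/
lemma parallel_linkage {F A X Y Z : Type*} [Field F] [Fintype F] [AddCommGroup A] [Module F A]
    [FiniteDimensional F A] [AddCommGroup X] [Module F X] [Finite X]
    [AddCommGroup Y] [Module F Y] [Finite Y] [AddCommGroup Z] [Module F Z] [Finite Z]
    {D₁ D₂ : Type*} [AddCommGroup D₁] [Module F D₁] [Finite D₁] [AddCommGroup D₂] [Module F D₂]
    [Finite D₂] {n δ : ℕ} (hδ : 0 < δ) (hn : finrank F (X × Y × Z) = n)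
    (Λ₁ : D₁ →ₗ[F] A →ₗ[F] X × Y)
    (hΛ₁ : ∀ c, c ≠ 0 → finrank F (LinearMap.ker (Λ₁ c)) + δ ≤ finrank F A)
    (Λ₂ : D₂ →ₗ[F] A →ₗ[F] Y × Z)
    (hΛ₂ : ∀ c, c ≠ 0 → finrank F (LinearMap.ker (Λ₂ c)) + δ ≤ finrank F A)
    (C₁ : Finset (Submodule F Z)) (hC₁ : ∀ U ∈ C₁, finrank F U = finrank F A)
    (hd₁ : ∀ U ∈ C₁, ∀ W ∈ C₁, U ≠ W → finrank F ↥(U ⊓ W) + δ ≤ finrank F A)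
    (C₂ : Finset (Submodule F X)) (hC₂ : ∀ U ∈ C₂, finrank F U = finrank F A)
    (hd₂ : ∀ U ∈ C₂, ∀ W ∈ C₂, U ≠ W → finrank F ↥(U ⊓ W) + δ ≤ finrank F A) :
    C₁.card * Nat.card D₁ +
        C₂.card * Nat.card {c : D₂ // δ ≤ finrank F (LinearMap.ker (Λ₂ c))} ≤
      maxCDCSize F n (2 * δ) (finrank F A) := by
  choose φ hφi hφr using fun U : C₁ => exists_injective_range_eq (A := A) U.1 (hC₁ U.1 U.2)
  choose ψ hψi hψr using fun U : C₂ => exists_injective_range_eq (A := A) U.1 (hC₂ U.1 U.2)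
  let πZ : X × Y × Z →ₗ[F] Z := LinearMap.snd F Y Z ∘ₗ LinearMap.snd F X (Y × Z)
  let πX : X × Y × Z →ₗ[F] X := LinearMap.fst F X (Y × Z)
  let f (p : C₁ × D₁) : A →ₗ[F] X × Y × Z :=
    (LinearMap.fst F X Y ∘ₗ Λ₁ p.2).prod ((LinearMap.snd F X Y ∘ₗ Λ₁ p.2).prod (φ p.1))
  let g (p : C₂ × {c : D₂ // δ ≤ finrank F (LinearMap.ker (Λ₂ c))}) : A →ₗ[F] X × Y × Z :=
    (ψ p.1).prod (Λ₂ p.2.1)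
  have hπf p : πZ ∘ₗ f p = φ p.1 := rfl
  have hπg p : πX ∘ₗ g p = ψ p.1 := rfl
  have hfi p : Function.Injective (f p) :=
    Function.Injective.of_comp (f := πZ) (hφi p.1)
  have hgi p : Function.Injective (g p) :=
    Function.Injective.of_comp (f := πX) (hψi p.1)
  have hfg p r : finrank F ↥(LinearMap.range (f p) ⊓ LinearMap.range (g r)) + δ ≤
      finrank F A := by
    refine le_trans ?_ (finrank_range_inf_add_ker_le πZ (f p) (g r) (hφi p.1) (hgi r))
    gcongr
    refine r.2.2.trans (Submodule.finrank_mono fun x hx => ?_)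
    exact congrArg Prod.snd (LinearMap.mem_ker.1 hx)
  have hff p p' (h : p ≠ p') :
      finrank F ↥(LinearMap.range (f p) ⊓ LinearMap.range (f p')) + δ ≤ finrank F A := by
    obtain ⟨U, c⟩ := p
    obtain ⟨U', c'⟩ := p'
    by_cases hU : U = U'
    · subst hU
      have hc : c - c' ≠ 0 := sub_ne_zero.2 fun hc => h (by rw [hc])
      refine le_trans (Nat.add_le_add_right ?_ δ) (hΛ₁ _ hc)
      refine (finrank_range_inf_le_ker_sub πZ _ _ (by rw [hπf, hπf]) (hφi U)).trans
        (Submodule.finrank_mono fun x hx => ?_)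
      have hx' := LinearMap.mem_ker.1 hx
      rw [LinearMap.mem_ker, map_sub]
      exact Prod.ext (congrArg (fun y : X × Y × Z => y.1) hx')
        (congrArg (fun y : X × Y × Z => y.2.1) hx')
    · refine le_trans (Nat.add_le_add_right ?_ δ)
        (hd₁ U.1 U.2 U'.1 U'.2 (fun h => hU (Subtype.ext h)))
      refine (finrank_range_inf_le πZ _ _ (hφi U)).trans ?_
      rw [hπf, hπf, hφr, hφr]
  have hgg p p' (h : p ≠ p') :
      finrank F ↥(LinearMap.range (g p) ⊓ LinearMap.range (g p')) + δ ≤ finrank F A := by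
    obtain ⟨U, c⟩ := p
    obtain ⟨U', c'⟩ := p'
    by_cases hU : U = U'
    · subst hU
      have hc : c.1 - c'.1 ≠ 0 := sub_ne_zero.2 fun hc => h (by rw [Subtype.ext hc])
      refine le_trans (Nat.add_le_add_right ?_ δ) (hΛ₂ _ hc)
      refine (finrank_range_inf_le_ker_sub πX _ _ (by rw [hπg, hπg]) (hψi U)).trans
        (Submodule.finrank_mono fun x hx => ?_)
      rw [LinearMap.mem_ker, map_sub]
      exact congrArg Prod.snd (LinearMap.mem_ker.1 hx)
    · refine le_trans (Nat.add_le_add_right ?_ δ)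
        (hd₂ U.1 U.2 U'.1 U'.2 (fun h => hU (Subtype.ext h)))
      refine (finrank_range_inf_le πX _ _ (hψi U)).trans ?_
      rw [hπg, hπg, hψr, hψr]
  have key := card_le_maxCDCSize hn hδ
    (Sum.elim (fun p => LinearMap.range (f p)) (fun p => LinearMap.range (g p)))
    (k := finrank F A) ?_ ?_
  · rwa [Nat.card_sum, Nat.card_prod, Nat.card_prod, Nat.card_eq_fintype_card (α := C₁),
      Nat.card_eq_fintype_card (α := C₂), Fintype.card_coe, Fintype.card_coe] at key
  · rintro (p | p)
    · exact LinearMap.finrank_range_of_inj (hfi p)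
    · exact LinearMap.finrank_range_of_inj (hgi p)
  · rintro (p | p) (r | r) h
    · exact hff p r fun h' => h (by rw [h'])
    · exact hfg p r
    · rw [inf_comm]
      exact hfg r p
    · exact hgg p r fun hpr => h (by rw [hpr])

/-- For `k ≥ d`, `n1 ≥ k`, `n2 ≥ k`, `0 ≤ t ≤ n1 − k` (`d` even positive, `q` prime power),
`A_q(n1+n2, d, k) ≥ q^{n1(k−d/2+1)}·A_q(n2, d, k) + A_q(n1−t, d, k)·(1 + Σ_{r=d/2}^{k−d/2} A_r)`,
where `A_r` is the Delsarte rank-`r` count of a linear MRD code in `F_q^{k×(n2+t)}` with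
minimum rank distance `d/2`. -/
theorem two_parallel_linkage_lower_bound_t (q d k n1 n2 t : ℕ) (hq : IsPrimePow q)
    (hd : 0 < d) (hdeven : Even d) (hkd : d ≤ k) (hn1 : k ≤ n1) (hn2 : k ≤ n2)
    (ht : t ≤ n1 - k)
    (F : Type*) [Field F] [Fintype F] (hcard : Fintype.card F = q) :
    ((q : ℚ) ^ (n1 * (k - d / 2 + 1)) * (maxCDCSize F n2 d k : ℚ) +
        (maxCDCSize F (n1 - t) d k : ℚ) *
          (1 + ∑ r ∈ Finset.Icc (d / 2) (k - d / 2),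
            gaussBinom q k r *
              ∑ i ∈ Finset.range (r - d / 2 + 1),
                (-1 : ℚ) ^ i * (q : ℚ) ^ (i * (i - 1) / 2) * gaussBinom q r i *
                  ((q : ℚ) ^ ((n2 + t) * (r - d / 2 + 1 - i)) - 1))) ≤
      (maxCDCSize F (n1 + n2) d k : ℚ) := by
  obtain ⟨δ, rfl⟩ := hdeven
  rw [← two_mul] at hd hkd ⊢
  rw [Nat.mul_div_cancel_left δ two_pos]
  subst hcard
  have hA : finrank F (Fin k → F) = k := by simp
  have hXY : finrank F ((Fin (n1 - t) → F) × (Fin t → F)) = n1 := by simp; omega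
  have hYZ : finrank F ((Fin t → F) × (Fin n2 → F)) = n2 + t := by simp; omega
  have hXYZ : finrank F ((Fin (n1 - t) → F) × (Fin t → F) × (Fin n2 → F)) = n1 + n2 := by
    simp; omega
  obtain ⟨C₁, hC₁, hk₁, hd₁⟩ := exists_code_card_eq_maxCDCSize F n2 δ k
  obtain ⟨C₂, hC₂, hk₂, hd₂⟩ := exists_code_card_eq_maxCDCSize F (n1 - t) δ k
  obtain ⟨Λ₁, hΛ₁⟩ := exists_linear_mrd F (Fin k → F) ((Fin (n1 - t) → F) × (Fin t → F))
    (by omega) (by omega) (k - δ + 1)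
  obtain ⟨Λ₂, hΛ₂⟩ := exists_linear_mrd F (Fin k → F) ((Fin t → F) × (Fin n2 → F))
    (by omega) (by omega) (k - δ + 1)
  have hsum := sum_rank_distribution_le_card Λ₂ (δ := δ) (by omega) (by omega)
    (by rw [Module.finrank_pi_fintype, Finset.sum_const, Finset.card_univ, Fintype.card_fin, hA,
      smul_eq_mul, mul_comm]) (by rwa [hA])
  have hlink := parallel_linkage (n := n1 + n2) (δ := δ) (by omega) hXYZ
    Λ₁ (fun c hc => by have := hΛ₁ c hc; omega) Λ₂ (fun c hc => by have := hΛ₂ c hc; omega)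
    C₁ (by rwa [hA]) (by rwa [hA]) C₂ (by rwa [hA]) (by rwa [hA])
  have hD₁ : Nat.card (Fin (k - δ + 1) → (Fin (n1 - t) → F) × (Fin t → F)) =
      Fintype.card F ^ (n1 * (k - δ + 1)) := by
    rw [Module.natCard_eq_pow_finrank (K := F), Module.finrank_pi_fintype, Finset.sum_const,
      Finset.card_univ, Fintype.card_fin, hXY, Nat.card_eq_fintype_card, smul_eq_mul, mul_comm]
  rw [hA, hYZ] at hsum
  rw [hA, hC₁, hC₂, hD₁, mul_comm (maxCDCSize F n2 _ _)] at hlink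
  refine le_trans ?_ (Nat.cast_le.2 hlink)
  push_cast
  gcongr
end

section
/- If A_2(8, 4, 4) ≥ 4801, then A_2(12, 4, 4) ≥ 19673822 = 4801·2^{12} + 1 + 8925. -/
open Module

theorem finrank_map_fst_add_finrank_comap_inr {F W S : Type*} [Field F] [AddCommGroup W]
    [Module F W] [AddCommGroup S] [Module F S] [FiniteDimensional F W] [FiniteDimensional F S]
    (X : Submodule F (W × S)) :
    finrank F (X.map (LinearMap.fst F W S)) + finrank F (X.comap (LinearMap.inr F W S)) =
      finrank F X := by
  rw [← LinearMap.finrank_range_add_finrank_ker ((LinearMap.fst F W S).domRestrict X),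
    LinearMap.range_domRestrict]
  congr 1
  have h : ∀ s : X.comap (LinearMap.inr F W S),
      LinearMap.inr F W S s ∈ X := fun s => s.2
  refine LinearEquiv.finrank_eq (LinearEquiv.ofBijective
    (LinearMap.codRestrict _ (LinearMap.codRestrict X
      ((LinearMap.inr F W S).comp (Submodule.subtype _)) h) fun s => ?_) ⟨?_, ?_⟩)
  · exact LinearMap.mem_ker.mpr rfl
  · intro s t hst
    exact Subtype.ext (congrArg (fun z => z.1.1.2) hst)
  · rintro ⟨⟨⟨w, s⟩, hx⟩, hk⟩
    obtain rfl : w = 0 := by simpa using hk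
    exact ⟨⟨s, hx⟩, rfl⟩

theorem finrank_inf_le_one {F V : Type*} [Field F] [AddCommGroup V] [Module F V]
    [FiniteDimensional F V] {A B : Submodule F V} (hA : finrank F A = 2) (hB : finrank F B = 2)
    (h : A ≠ B) : finrank F ↥(A ⊓ B) ≤ 1 := by
  by_contra! hc
  have h1 : A ⊓ B = A := Submodule.eq_of_le_of_finrank_le inf_le_left (by omega)
  have h2 : A ⊓ B = B := Submodule.eq_of_le_of_finrank_le inf_le_right (by omega)
  exact h (h1.symm.trans h2)

theorem exists_rankMetricCode {U S : Type*} [AddCommGroup U] [Module (ZMod 2) U]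
    [AddCommGroup S] [Module (ZMod 2) S] (hU : finrank (ZMod 2) U = 4)
    (hS : finrank (ZMod 2) S = 4) :
    ∃ D : Fin 4096 → (U →ₗ[ZMod 2] S),
      ∀ a b, a ≠ b → finrank (ZMod 2) (LinearMap.ker (D a - D b)) ≤ 2 := by
  let K := GaloisField 2 4
  have hK : finrank (ZMod 2) K = 4 := GaloisField.finrank 2 (by norm_num)
  have : FiniteDimensional (ZMod 2) U := FiniteDimensional.of_finrank_pos (by omega)
  have : FiniteDimensional (ZMod 2) S := FiniteDimensional.of_finrank_pos (by omega)
  let φ : U ≃ₗ[ZMod 2] K := LinearEquiv.ofFinrankEq _ _ (hU.trans hK.symm)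
  let ψ : K ≃ₗ[ZMod 2] S := LinearEquiv.ofFinrankEq _ _ (hK.trans hS.symm)
  have hcard : Nat.card (Fin 3 → K) = 4096 := by
    rw [Nat.card_fun, GaloisField.card 2 4 (by norm_num)]; simp
  let idx : Fin 4096 ≃ (Fin 3 → K) := (Finite.equivFinOfCardEq hcard).symm
  let frob : K →ₗ[ZMod 2] K := (FiniteField.frobeniusAlgHom (ZMod 2) K).toLinearMap
  have hfrob : ∀ x, frob x = x ^ 2 := fun x => by
    simp [frob]
  let G : (Fin 3 → K) → (K →ₗ[ZMod 2] K) := fun a =>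
    LinearMap.mulLeft (ZMod 2) (a 0) + LinearMap.mulLeft (ZMod 2) (a 1) ∘ₗ frob +
      LinearMap.mulLeft (ZMod 2) (a 2) ∘ₗ frob ∘ₗ frob
  refine ⟨fun a => ψ.toLinearMap ∘ₗ G (idx a) ∘ₗ φ.toLinearMap, fun a b hab => ?_⟩
  set c := idx a - idx b with hc
  have hc0 : c ≠ 0 := fun h => hab (idx.injective (sub_eq_zero.mp h))
  let P : Polynomial K := .C (c 0) * .X + .C (c 1) * .X ^ 2 + .C (c 2) * .X ^ 4
  have hP0 : P ≠ 0 := by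
    intro h
    apply hc0
    have h1 := congrArg (Polynomial.coeff · 1) h
    have h2 := congrArg (Polynomial.coeff · 2) h
    have h4 := congrArg (Polynomial.coeff · 4) h
    simp [P, Polynomial.coeff_X_pow] at h1 h2 h4
    ext i
    fin_cases i <;> simp [h1, h2, h4]
  have hPdeg : P.natDegree ≤ 4 := by
    simp only [P]; compute_degree
  set N := LinearMap.ker (ψ.toLinearMap ∘ₗ G (idx a) ∘ₗ φ.toLinearMap -
    ψ.toLinearMap ∘ₗ G (idx b) ∘ₗ φ.toLinearMap) with hN
  have hroot : ∀ u : N, φ u ∈ P.rootSet K := by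
    rintro ⟨u, hu⟩
    rw [Polynomial.mem_rootSet]
    refine ⟨hP0, ?_⟩
    rw [hN, LinearMap.mem_ker, LinearMap.sub_apply, sub_eq_zero] at hu
    have := ψ.injective hu
    simp [G, hfrob] at this
    simp [P, hc]
    linear_combination this
  have hle : Nat.card N ≤ 4 := by
    have h1 : Nat.card N ≤ Nat.card (P.rootSet K) :=
      Nat.card_le_card_of_injective (fun u : N => (⟨φ u, hroot u⟩ : P.rootSet K)) fun u v h => by
        simpa using h
    have h2 := P.ncard_rootSet_le K
    rw [Set.ncard_def, Set.encard] at h2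
    exact h1.trans (h2.trans hPdeg)
  rw [Module.natCard_eq_pow_finrank (K := ZMod 2), Nat.card_zmod] at hle
  exact (Nat.pow_le_pow_iff_right (by norm_num : 1 < 2)).mp (hle.trans_eq (by norm_num : 4 = 2 ^ 2))

theorem bddAbove_cdcSizes (F : Type*) [Field F] [Fintype F] (n d k : ℕ) :
    BddAbove {M | ∃ C : Finset (Submodule F (Fin n → F)), C.card = M ∧
      (∀ U ∈ C, finrank F ↥U = k) ∧
      ∀ U ∈ C, ∀ W ∈ C, U ≠ W → d ≤ subspaceDist U W} := by
  classical
  have : Fintype (Submodule F (Fin n → F)) := Fintype.ofFinite _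
  refine ⟨Fintype.card (Submodule F (Fin n → F)), ?_⟩
  rintro _ ⟨C, rfl, -⟩
  exact C.card_le_univ

theorem exists_card_eq_maxCDCSize (F : Type*) [Field F] [Fintype F] (n d k : ℕ) :
    ∃ C : Finset (Submodule F (Fin n → F)), C.card = maxCDCSize F n d k ∧
      (∀ U ∈ C, finrank F ↥U = k) ∧
      ∀ U ∈ C, ∀ W ∈ C, U ≠ W → d ≤ subspaceDist U W := by
  refine (Nat.sSup_mem ?_ (bddAbove_cdcSizes F n d k) :)
  exact ⟨0, ∅, by simp⟩

theorem subspaceDist_add_two_mul_finrank_inf {F : Type*} [Field F] {n k : ℕ}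
    {U W : Submodule F (Fin n → F)} (hU : finrank F U = k) (hW : finrank F W = k) :
    subspaceDist U W + 2 * finrank F ↥(U ⊓ W) = 2 * k := by
  have h1 := Submodule.finrank_sup_add_finrank_inf_eq U W
  have h2 := Submodule.finrank_mono (inf_le_left : U ⊓ W ≤ U)
  unfold subspaceDist
  omega

/-- A family of `k`-dimensional subspaces whose pairwise intersections have dimension less than
`k` and at most `r` is a constant dimension code. -/
theorem card_le_maxCDCSize_s16 {F V ι : Type*} [Field F] [Fintype F] [AddCommGroup V] [Module F V]
    [FiniteDimensional F V] [Fintype ι] {n k r : ℕ} (hV : finrank F V = n) (hr : r < k)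
    (L : ι → Submodule F V) (hL : ∀ a, finrank F (L a) = k)
    (hinf : ∀ a b, a ≠ b → finrank F ↥(L a ⊓ L b) ≤ r) :
    Fintype.card ι ≤ maxCDCSize F n (2 * (k - r)) k := by
  classical
  let e : V ≃ₗ[F] (Fin n → F) := LinearEquiv.ofFinrankEq _ _ (by simp [hV])
  have hrank : ∀ X : Submodule F V, finrank F (X.map e.toLinearMap) = finrank F X :=
    fun X => e.finrank_map_eq X
  have hinj : Function.Injective fun a => (L a).map e.toLinearMap := by
    intro a b hab
    by_contra hne
    have h1 := Submodule.map_injective_of_injective e.injective hab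
    have h2 := hinf a b hne
    rw [← h1, inf_idem, hL] at h2
    omega
  refine le_csSup (bddAbove_cdcSizes F n _ k)
    ⟨Finset.univ.image fun a => (L a).map e.toLinearMap, ?_, ?_, ?_⟩
  · rw [Finset.card_image_of_injective _ hinj, Finset.card_univ]
  · simp [hrank, hL]
  · simp only [Finset.mem_image, Finset.mem_univ, true_and]
    rintro _ ⟨a, rfl⟩ _ ⟨b, rfl⟩ hne
    have h1 := subspaceDist_add_two_mul_finrank_inf ((hrank _).trans (hL a))
      ((hrank _).trans (hL b))
    rw [← Submodule.map_inf _ e.injective, hrank] at h1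
    have h2 := hinf a b (by rintro rfl; exact hne rfl)
    omega

theorem exists_complementary_map {F T S : Type*} [Field F] [AddCommGroup T] [Module F T]
    [AddCommGroup S] [Module F S] [FiniteDimensional F T] [FiniteDimensional F S]
    (hTS : finrank F S = 2 * finrank F T) (f : T →ₗ[F] S) (hf : Function.Injective f) :
    ∃ g : T →ₗ[F] S, ∀ c d, g c + f d = 0 → c = 0 ∧ d = 0 := by
  obtain ⟨Q, hQ⟩ := Submodule.exists_isCompl (LinearMap.range f)
  have h1 := Submodule.finrank_add_eq_of_isCompl hQ
  rw [LinearMap.finrank_range_of_inj hf] at h1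
  let e : T ≃ₗ[F] Q := LinearEquiv.ofFinrankEq _ _ (by omega)
  refine ⟨Q.subtype ∘ₗ e.toLinearMap, fun c d h => ?_⟩
  have hc : (e c : S) = 0 := by
    refine Submodule.disjoint_def.mp hQ.disjoint _ ?_ (e c).2
    exact ⟨-d, by rw [map_neg]; exact (eq_neg_of_add_eq_zero_left h).symm⟩
  have hd : f d = 0 := by simpa [hc] using h
  exact ⟨by simpa using hc, hf (by simpa using hd)⟩

/-- Seven classes of five pairwise complementary planes of `𝔽₂⁴`, given by pairs of generators
(vectors are encoded in binary). Together they contain all 35 planes. -/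
def parallelismGenerators : Fin 7 → Fin 5 → ℕ × ℕ :=
  ![![(1, 2), (4, 8), (5, 10), (6, 11), (7, 9)],
    ![(1, 4), (2, 8), (3, 13), (6, 9), (7, 11)],
    ![(1, 6), (2, 9), (3, 12), (4, 10), (5, 8)],
    ![(1, 8), (2, 12), (3, 5), (4, 11), (7, 10)],
    ![(1, 10), (2, 13), (3, 4), (5, 9), (6, 8)],
    ![(1, 12), (2, 4), (3, 9), (5, 11), (7, 8)],
    ![(1, 14), (2, 5), (3, 8), (4, 9), (6, 10)]]

/-- The vector of `𝔽₂⁴` whose coordinates are the binary digits of `m`. -/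
def binaryVector (m : ℕ) : Fin 4 → ZMod 2 := fun k => if m.testBit k then 1 else 0

theorem exists_parallelism {S : Type*} [AddCommGroup S] [Module (ZMod 2) S]
    (hS : finrank (ZMod 2) S = 4) : ∃ π : Fin 7 → Fin 5 → (ZMod 2 × ZMod 2 →ₗ[ZMod 2] S),
    (∀ i j, Function.Injective (π i j)) ∧
    (∀ i j j', j ≠ j' → LinearMap.range (π i j) ⊓ LinearMap.range (π i j') = ⊥) ∧
    ∀ i i' j j', i ≠ i' → LinearMap.range (π i j) ≠ LinearMap.range (π i' j') := by
  let p i j := binaryVector (parallelismGenerators i j).1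
  let q i j := binaryVector (parallelismGenerators i j).2
  have : FiniteDimensional (ZMod 2) S := FiniteDimensional.of_finrank_pos (by omega)
  let θ : (Fin 4 → ZMod 2) ≃ₗ[ZMod 2] S := LinearEquiv.ofFinrankEq _ _ (by simp [hS])
  let π i j : ZMod 2 × ZMod 2 →ₗ[ZMod 2] S := θ.toLinearMap ∘ₗ
    (LinearMap.toSpanSingleton _ _ (p i j)).coprod (LinearMap.toSpanSingleton _ _ (q i j))
  have hπ : ∀ i j c, π i j c = θ (c.1 • p i j + c.2 • q i j) := fun i j c => by simp [π]
  have h1 : ∀ i j (c : ZMod 2 × ZMod 2), c.1 • p i j + c.2 • q i j = 0 → c = 0 := by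
    decide +kernel
  have h2 : ∀ i j j', j ≠ j' → ∀ c d : ZMod 2 × ZMod 2,
      c.1 • p i j + c.2 • q i j = d.1 • p i j' + d.2 • q i j' → c = 0 := by
    decide +kernel
  have h3 : ∀ i i' j j', i ≠ i' → ¬ ((∃ c : ZMod 2 × ZMod 2, c.1 • p i j + c.2 • q i j = p i' j') ∧
      ∃ c : ZMod 2 × ZMod 2, c.1 • p i j + c.2 • q i j = q i' j') := by
    decide +kernel
  refine ⟨π, fun i j => ?_, fun i j j' hj => ?_, fun i i' j j' hi h => ?_⟩
  · rw [injective_iff_map_eq_zero]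
    exact fun c hc => h1 i j c (by rwa [hπ, LinearEquiv.map_eq_zero_iff] at hc)
  · rw [eq_bot_iff]
    rintro _ ⟨⟨c, rfl⟩, ⟨d, hd⟩⟩
    rw [hπ, hπ] at hd
    simp [h2 i j j' hj c d (θ.injective hd.symm)]
  · refine h3 i i' j j' hi ⟨?_, ?_⟩
    · obtain ⟨c, hc⟩ : π i' j' (1, 0) ∈ LinearMap.range (π i j) := h ▸ LinearMap.mem_range_self _ _
      rw [hπ, hπ] at hc
      exact ⟨c, by simpa using θ.injective hc⟩
    · obtain ⟨c, hc⟩ : π i' j' (0, 1) ∈ LinearMap.range (π i j) := h ▸ LinearMap.mem_range_self _ _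
      rw [hπ, hπ] at hc
      exact ⟨c, by simpa using θ.injective hc⟩

/-- If every element is related to at most `m` elements, then among more than `m * n` elements
there are `n + 1` elements none of which is related to an earlier one. -/
theorem exists_list_pairwise_notMem {α : Type*} [Fintype α] [DecidableEq α] (R : α → Finset α)
    (B : Finset α) {m : ℕ} (hR : ∀ a, (R a).card ≤ m) (n : ℕ)
    (hn : B.card + m * n < Fintype.card α) :
    ∃ l : List α, l.length = n + 1 ∧ (∀ a ∈ l, a ∉ B) ∧ l.Pairwise fun a b => a ∉ R b := by
  have step : ∀ l : List α, B.card + m * l.length < Fintype.card α →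
      ∃ a, a ∉ B ∧ ∀ b ∈ l, a ∉ R b := by
    intro l hl
    have hcard : (B ∪ l.toFinset.biUnion R).card < Fintype.card α := by
      refine (Finset.card_union_le _ _).trans_lt (lt_of_le_of_lt ?_ hl)
      gcongr
      refine (Finset.card_biUnion_le_card_mul _ _ m fun a _ => hR a).trans ?_
      rw [mul_comm]
      gcongr
      exact l.toFinset_card_le
    obtain ⟨a, -, ha⟩ := Finset.exists_mem_notMem_of_card_lt_card
      (hcard.trans_eq Finset.card_univ.symm)
    refine ⟨a, fun h => ha (Finset.mem_union_left _ h), fun b hb h => ha ?_⟩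
    exact Finset.mem_union_right _ (Finset.mem_biUnion.mpr ⟨b, by simpa using hb, h⟩)
  induction n with
  | zero =>
    obtain ⟨a, ha, -⟩ := step [] (by simpa using hn)
    exact ⟨[a], by simpa using ha⟩
  | succ n ih =>
    obtain ⟨l, hl, hlB, hlR⟩ := ih (by rw [mul_add] at hn; omega)
    obtain ⟨a, ha, haR⟩ := step l (by rwa [hl])
    exact ⟨a :: l, by simp [hl], by simpa using ⟨ha, hlB⟩, List.pairwise_cons.mpr ⟨haR, hlR⟩⟩

theorem exists_line_orbits {W : Type*} [AddCommGroup W] [Module (ZMod 2) W]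
    (hW : finrank (ZMod 2) W = 8) :
    ∃ l : Fin 7 → Fin 255 → (ZMod 2 × ZMod 2 →ₗ[ZMod 2] W),
      (∀ i x, Function.Injective (l i x)) ∧
      (∀ i x y, x ≠ y → Function.Injective (l i x - l i y)) ∧
      ∀ i j x y, i ≠ j → LinearMap.range (l i x) ≠ LinearMap.range (l j y) := by
  classical
  let K := GaloisField 2 8
  have hK : finrank (ZMod 2) K = 8 := GaloisField.finrank 2 (by norm_num)
  have : FiniteDimensional (ZMod 2) W := FiniteDimensional.of_finrank_pos (by omega)
  have : Fintype K := Fintype.ofFinite K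
  have hcard : Fintype.card K = 256 := by
    rw [← Nat.card_eq_fintype_card, GaloisField.card 2 8 (by norm_num)]; norm_num
  let θ : K ≃ₗ[ZMod 2] W := LinearEquiv.ofFinrankEq _ _ (hK.trans hW.symm)
  let u : Fin 255 ≃ Kˣ := (Finite.equivFinOfCardEq (by
    rw [Nat.card_eq_fintype_card, Fintype.card_units, hcard])).symm
  let ev : K → (ZMod 2 × ZMod 2 →ₗ[ZMod 2] K) := fun β =>
    (LinearMap.toSpanSingleton _ _ 1).coprod (LinearMap.toSpanSingleton _ _ β)
  have hev : ∀ β c, ev β c = c.1 • (1 : K) + c.2 • β := fun β c => by simp [ev]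
  let R : K → Finset K := fun β => Finset.univ.image
    fun t : (ZMod 2 × ZMod 2) × (ZMod 2 × ZMod 2) => ev β t.1 / ev β t.2
  obtain ⟨bs, hlen, hB, hR⟩ := exists_list_pairwise_notMem R {0, 1} (m := 16)
    (fun β => Finset.card_image_le.trans (by simp)) 6
    (by rw [hcard]; exact (Nat.add_le_add_right (Finset.card_le_two) _).trans_lt (by norm_num))
  let β : Fin 7 → K := fun i => bs.get (i.cast hlen.symm)
  have hβ : ∀ i, β i ≠ 0 ∧ β i ≠ 1 := fun i => by
    have h := hB _ (bs.get_mem (i.cast hlen.symm))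
    rwa [Finset.mem_insert, Finset.mem_singleton, not_or] at h
  have hβR : ∀ i j, i < j → β i ∉ R (β j) := fun i j hij =>
    List.pairwise_iff_get.mp hR _ _ hij
  have hinj : ∀ i c, ev (β i) c = 0 → c = 0 := by
    intro i ⟨a, b⟩ h
    rw [hev] at h
    have hz : ∀ z : ZMod 2, z = 0 ∨ z = 1 := by decide
    have h1 : 1 + β i ≠ 0 := fun h => (hβ i).2 (CharTwo.add_eq_zero.mp h).symm
    rcases hz a with rfl | rfl <;> rcases hz b with rfl | rfl <;> simp_all
  let l : Fin 7 → Fin 255 → (ZMod 2 × ZMod 2 →ₗ[ZMod 2] W) := fun i x =>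
    θ.toLinearMap ∘ₗ LinearMap.mulLeft (ZMod 2) (u x : K) ∘ₗ ev (β i)
  have hl : ∀ i x c, l i x c = θ (u x * ev (β i) c) := fun i x c => rfl
  have hlt : ∀ i j x y, i < j → LinearMap.range (l i x) ≠ LinearMap.range (l j y) := by
    intro i j x y hij h
    obtain ⟨c, hc⟩ : l i x (1, 0) ∈ LinearMap.range (l j y) := h ▸ LinearMap.mem_range_self _ _
    obtain ⟨d, hd⟩ : l i x (0, 1) ∈ LinearMap.range (l j y) := h ▸ LinearMap.mem_range_self _ _
    rw [hl, hl] at hc hd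
    have hc := θ.injective hc
    have hd := θ.injective hd
    rw [hev (β i)] at hc hd
    simp at hc hd
    have hc0 : ev (β j) c ≠ 0 := fun h => (u x).ne_zero (by rw [← hc, h, mul_zero])
    refine hβR i j hij (Finset.mem_image.mpr ⟨(d, c), Finset.mem_univ _, ?_⟩)
    rw [div_eq_iff hc0]
    refine mul_left_cancel₀ (u y).ne_zero ?_
    rw [hd, ← hc]
    ring
  refine ⟨l, fun i x => ?_, fun i x y hxy => ?_, fun i j x y hij => ?_⟩
  · rw [injective_iff_map_eq_zero]
    intro c hc
    exact hinj i c (by simpa [hl] using hc)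
  · rw [injective_iff_map_eq_zero]
    intro c hc
    rw [LinearMap.sub_apply, hl, hl, ← map_sub, ← sub_mul] at hc
    have huxy : (u x : K) - u y ≠ 0 := fun h =>
      hxy (u.injective (Units.ext (sub_eq_zero.mp h)))
    exact hinj i c (by simpa [huxy] using hc)
  · rcases lt_or_gt_of_ne hij with h | h
    · exact hlt i j x y h
    · exact (hlt j i y x h).symm

theorem finrank_inf_le_add {F W S : Type*} [Field F] [AddCommGroup W]
    [Module F W] [AddCommGroup S] [Module F S] [FiniteDimensional F W] [FiniteDimensional F S]
    (X Y : Submodule F (W × S)) :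
    finrank F ↥(X ⊓ Y) ≤
      finrank F ↥(X.map (LinearMap.fst F W S) ⊓ Y.map (LinearMap.fst F W S)) +
        finrank F ↥(X.comap (LinearMap.inr F W S) ⊓ Y.comap (LinearMap.inr F W S)) := by
  rw [← finrank_map_fst_add_finrank_comap_inr (X ⊓ Y), Submodule.comap_inf]
  gcongr
  exact Submodule.finrank_mono (Submodule.map_inf_le _)

section Lifting

variable {F W S T : Type*} [Field F] [AddCommGroup W] [Module F W] [AddCommGroup S] [Module F S]
  [AddCommGroup T] [Module F T]

/-- The graph of a linear map defined on a subspace. -/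
def graphOn (U : Submodule F W) (f : U →ₗ[F] S) : Submodule F (W × S) :=
  LinearMap.range (U.subtype.prod f)

theorem map_fst_graphOn (U : Submodule F W) (f : U →ₗ[F] S) :
    (graphOn U f).map (LinearMap.fst F W S) = U := by
  rw [graphOn, ← LinearMap.range_comp, LinearMap.fst_prod, Submodule.range_subtype]

theorem comap_inr_graphOn (U : Submodule F W) (f : U →ₗ[F] S) :
    (graphOn U f).comap (LinearMap.inr F W S) = ⊥ := by
  rw [eq_bot_iff]
  rintro s ⟨u, hu⟩
  simp only [LinearMap.prod_apply, Function.prod_apply, LinearMap.inr_apply, Prod.mk.injEq] at hu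
  obtain rfl : u = 0 := Subtype.ext hu.1
  simpa using hu.2.symm

theorem finrank_graphOn [FiniteDimensional F W] [FiniteDimensional F S] (U : Submodule F W)
    (f : U →ₗ[F] S) : finrank F (graphOn U f) = finrank F U := by
  rw [← finrank_map_fst_add_finrank_comap_inr, map_fst_graphOn, comap_inr_graphOn, finrank_bot,
    add_zero]

theorem finrank_graphOn_inf_le [FiniteDimensional F W] [FiniteDimensional F S]
    (U : Submodule F W) (f g : U →ₗ[F] S) :
    finrank F ↥(graphOn U f ⊓ graphOn U g) ≤ finrank F (LinearMap.ker (f - g)) := by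
  rw [← finrank_map_fst_add_finrank_comap_inr, Submodule.comap_inf, comap_inr_graphOn, bot_inf_eq,
    finrank_bot, add_zero, ← Submodule.finrank_map_subtype_eq]
  refine Submodule.finrank_mono ?_
  rintro _ ⟨_, ⟨⟨u, rfl⟩, ⟨v, hv⟩⟩, rfl⟩
  simp only [LinearMap.prod_apply, Function.prod_apply, Prod.mk.injEq] at hv
  obtain rfl : v = u := Subtype.ext hv.1
  exact ⟨v, by simpa [sub_eq_zero] using hv.2.symm, rfl⟩

/-- The subspace of `W × S` that meets `S` in the range of `π` and projects onto the range of `l`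
in `W`, glued along `ε`. -/
def gluedSubspace (l : T →ₗ[F] W) (ε π : T →ₗ[F] S) : Submodule F (W × S) :=
  LinearMap.range ((l.prod ε).coprod (LinearMap.inr F W S ∘ₗ π))

theorem mem_gluedSubspace {l : T →ₗ[F] W} {ε π : T →ₗ[F] S} {z : W × S} :
    z ∈ gluedSubspace l ε π ↔ ∃ c d, l c = z.1 ∧ ε c + π d = z.2 := by
  simp [gluedSubspace, Prod.ext_iff]

theorem map_fst_gluedSubspace (l : T →ₗ[F] W) (ε π : T →ₗ[F] S) :
    (gluedSubspace l ε π).map (LinearMap.fst F W S) = LinearMap.range l := by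
  ext w
  simp only [Submodule.mem_map, mem_gluedSubspace, LinearMap.mem_range, LinearMap.fst_apply]
  constructor
  · rintro ⟨z, ⟨c, d, h, -⟩, rfl⟩
    exact ⟨c, h⟩
  · rintro ⟨c, rfl⟩
    exact ⟨(l c, ε c), ⟨c, 0, rfl, by simp⟩, rfl⟩

theorem comap_inr_gluedSubspace {l : T →ₗ[F] W} (hl : Function.Injective l) (ε π : T →ₗ[F] S) :
    (gluedSubspace l ε π).comap (LinearMap.inr F W S) = LinearMap.range π := by
  ext s
  simp only [Submodule.mem_comap, mem_gluedSubspace, LinearMap.mem_range, LinearMap.inr_apply]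
  constructor
  · rintro ⟨c, d, h, rfl⟩
    obtain rfl : c = 0 := hl (by simpa using h)
    exact ⟨d, by simp⟩
  · rintro ⟨d, rfl⟩
    exact ⟨0, d, by simp, by simp⟩

theorem finrank_gluedSubspace_inf_le [FiniteDimensional F W] [FiniteDimensional F S]
    [FiniteDimensional F T] {l m : T →ₗ[F] W} {ε π : T →ₗ[F] S} (hl : Function.Injective l)
    (hlm : Function.Injective (l - m)) (hε : ∀ c d, ε c + π d = 0 → c = 0 ∧ d = 0) :
    finrank F ↥(gluedSubspace l ε π ⊓ gluedSubspace m ε π) ≤ finrank F T := by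
  have hbot : (gluedSubspace l ε π ⊓ gluedSubspace m ε π).map (LinearMap.fst F W S) = ⊥ := by
    rw [eq_bot_iff]
    rintro _ ⟨⟨w, s⟩, ⟨h1, h2⟩, rfl⟩
    obtain ⟨c, d, hc, hd⟩ := mem_gluedSubspace.mp h1
    obtain ⟨c', d', hc', hd'⟩ := mem_gluedSubspace.mp h2
    have h := (hε (c - c') (d - d') (by
      rw [map_sub, map_sub, ← add_sub_add_comm, hd, hd', sub_self])).1
    obtain rfl := sub_eq_zero.mp h
    obtain rfl : c = 0 := hlm (by simp [hc, hc'])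
    simpa using hc.symm
  rw [← finrank_map_fst_add_finrank_comap_inr, hbot, finrank_bot, zero_add]
  refine (Submodule.finrank_mono (Submodule.comap_mono inf_le_left)).trans ?_
  rw [comap_inr_gluedSubspace hl]
  exact LinearMap.finrank_range_le π

theorem map_fst_range_inr :
    (LinearMap.range (LinearMap.inr F W S)).map (LinearMap.fst F W S) = ⊥ := by
  rw [← LinearMap.range_comp, LinearMap.fst_comp_inr, LinearMap.range_zero]

end Lifting

/-- A family of 8925 subspaces of dimension four, pairwise meeting in dimension at most two, and meeting
`S` in dimension two. -/
theorem exists_gluedFamily {W S : Type*} [AddCommGroup W] [Module (ZMod 2) W] [AddCommGroup S]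
    [Module (ZMod 2) S] (hW : finrank (ZMod 2) W = 8) (hS : finrank (ZMod 2) S = 4) :
    ∃ L : Fin 7 × Fin 5 × Fin 255 → Submodule (ZMod 2) (W × S),
      (∀ a, finrank (ZMod 2) ((L a).map (LinearMap.fst (ZMod 2) W S)) = 2) ∧
      (∀ a, finrank (ZMod 2) ((L a).comap (LinearMap.inr (ZMod 2) W S)) = 2) ∧
      ∀ a b, a ≠ b → finrank (ZMod 2) ↥(L a ⊓ L b) ≤ 2 := by
  have : FiniteDimensional (ZMod 2) W := FiniteDimensional.of_finrank_pos (by omega)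
  have : FiniteDimensional (ZMod 2) S := FiniteDimensional.of_finrank_pos (by omega)
  obtain ⟨l, hl, hll, hlr⟩ := exists_line_orbits hW
  obtain ⟨π, hπ, hππ, hπr⟩ := exists_parallelism hS
  have hT : finrank (ZMod 2) (ZMod 2 × ZMod 2) = 2 := by simp
  choose ε hε using fun i j => exists_complementary_map (by rw [hS, hT]) (π i j) (hπ i j)
  have hl2 : ∀ i x, finrank (ZMod 2) (LinearMap.range (l i x)) = 2 := fun i x => by
    rw [LinearMap.finrank_range_of_inj (hl i x), hT]
  have hπ2 : ∀ i j, finrank (ZMod 2) (LinearMap.range (π i j)) = 2 := fun i j => by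
    rw [LinearMap.finrank_range_of_inj (hπ i j), hT]
  refine ⟨fun a => gluedSubspace (l a.1 a.2.2) (ε a.1 a.2.1) (π a.1 a.2.1), fun a => ?_,
    fun a => ?_, ?_⟩
  · rw [map_fst_gluedSubspace, hl2]
  · rw [comap_inr_gluedSubspace (hl _ _), hπ2]
  · rintro ⟨i, j, x⟩ ⟨i', j', x'⟩ hne
    dsimp only
    have hle := finrank_inf_le_add (gluedSubspace (l i x) (ε i j) (π i j))
      (gluedSubspace (l i' x') (ε i' j') (π i' j'))
    rw [map_fst_gluedSubspace, map_fst_gluedSubspace, comap_inr_gluedSubspace (hl _ _),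
      comap_inr_gluedSubspace (hl _ _)] at hle
    by_cases hi : i = i'
    · subst hi
      by_cases hj : j = j'
      · subst hj
        have hx : x ≠ x' := by rintro rfl; exact hne rfl
        exact (finrank_gluedSubspace_inf_le (hl i x) (hll i x x' hx) (hε i j)).trans_eq hT
      · rw [hππ i j j' hj, finrank_bot, add_zero] at hle
        exact hle.trans ((Submodule.finrank_mono inf_le_left).trans_eq (hl2 i x))
    · have h1 := finrank_inf_le_one (hl2 i x) (hl2 i' x') (hlr i i' x x' hi)
      have h2 := finrank_inf_le_one (hπ2 i j) (hπ2 i' j') (hπr i i' j j' hi)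
      omega

/-- If `A_2(8, 4, 4) ≥ 4801`, then `A_2(12, 4, 4) ≥ 19673822 = 4801·2^{12} + 1 + 8925`. -/
theorem A2_12_4_4_lower_bound (h : 4801 ≤ maxCDCSize (ZMod 2) 8 4 4) :
    19673822 ≤ maxCDCSize (ZMod 2) 12 4 4 ∧
    (19673822 : ℕ) = 4801 * 2 ^ 12 + 1 + 8925 := by
  refine ⟨?_, by norm_num⟩
  obtain ⟨C, hCcard, hCrank, hCdist⟩ := exists_card_eq_maxCDCSize (ZMod 2) 8 4 4
  let W := Fin 8 → ZMod 2
  let S := Fin 4 → ZMod 2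
  have hW : finrank (ZMod 2) W = 8 := by simp [W]
  have hS : finrank (ZMod 2) S = 4 := by simp [S]
  choose D hD using fun U : C => exists_rankMetricCode (hCrank U U.2) hS
  obtain ⟨L, hLmap, hLcomap, hLinf⟩ := exists_gluedFamily hW hS
  let A : (C × Fin 4096) ⊕ (Unit ⊕ Fin 7 × Fin 5 × Fin 255) → Submodule (ZMod 2) (W × S) :=
    Sum.elim (fun p => graphOn p.1.1 (D p.1 p.2))
      (Sum.elim (fun _ => LinearMap.range (LinearMap.inr (ZMod 2) W S)) L)
  have hgraph_graph : ∀ (U U' : C) m m', U ≠ U' →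
      finrank (ZMod 2) ↥(graphOn U.1 (D U m) ⊓ graphOn U'.1 (D U' m')) ≤ 2 := by
    intro U U' m m' hU
    refine (finrank_inf_le_add _ _).trans ?_
    rw [map_fst_graphOn, map_fst_graphOn, comap_inr_graphOn, bot_inf_eq, finrank_bot, add_zero]
    have h1 := subspaceDist_add_two_mul_finrank_inf (hCrank U U.2) (hCrank U' U'.2)
    have h2 := hCdist U U.2 U' U'.2 fun h => hU (Subtype.ext h)
    omega
  have hgraph_range : ∀ p : C × Fin 4096, finrank (ZMod 2)
      ↥(graphOn p.1.1 (D p.1 p.2) ⊓ LinearMap.range (LinearMap.inr (ZMod 2) W S)) ≤ 2 := fun p => by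
    refine (finrank_inf_le_add _ _).trans ?_
    rw [comap_inr_graphOn, map_fst_range_inr, inf_bot_eq, bot_inf_eq, finrank_bot, finrank_bot]
    norm_num
  have hgraph_glued : ∀ (p : C × Fin 4096) b,
      finrank (ZMod 2) ↥(graphOn p.1.1 (D p.1 p.2) ⊓ L b) ≤ 2 := fun p b => by
    refine (finrank_inf_le_add _ _).trans ?_
    rw [comap_inr_graphOn, bot_inf_eq, finrank_bot, add_zero]
    exact (Submodule.finrank_mono inf_le_right).trans_eq (hLmap b)
  have hrange_glued : ∀ b,
      finrank (ZMod 2) ↥(LinearMap.range (LinearMap.inr (ZMod 2) W S) ⊓ L b) ≤ 2 := fun b => by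
    refine (finrank_inf_le_add _ _).trans ?_
    rw [map_fst_range_inr, bot_inf_eq, finrank_bot, zero_add]
    exact (Submodule.finrank_mono inf_le_right).trans_eq (hLcomap b)
  have hrank : ∀ a, finrank (ZMod 2) (A a) = 4 := by
    rintro (p | u | b)
    · exact (finrank_graphOn _ _).trans (hCrank _ p.1.2)
    · exact (LinearMap.finrank_range_of_inj LinearMap.inr_injective).trans hS
    · change finrank (ZMod 2) (L b) = 4
      rw [← finrank_map_fst_add_finrank_comap_inr, hLmap, hLcomap]
  have hinf : ∀ a b, a ≠ b → finrank (ZMod 2) ↥(A a ⊓ A b) ≤ 2 := by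
    rintro (p | u | a) (q | v | b) hne
    · obtain ⟨U, m⟩ := p
      obtain ⟨U', m'⟩ := q
      by_cases hU : U = U'
      · subst hU
        exact (finrank_graphOn_inf_le _ _ _).trans (hD U m m' (by rintro rfl; exact hne rfl))
      · exact hgraph_graph U U' m m' hU
    · exact hgraph_range p
    · exact hgraph_glued p b
    · rw [inf_comm]; exact hgraph_range q
    · exact absurd rfl hne
    · exact hrange_glued b
    · rw [inf_comm]; exact hgraph_glued q a
    · rw [inf_comm]; exact hrange_glued a
    · exact hLinf a b (by rintro rfl; exact hne rfl)
  have hcard := card_le_maxCDCSize_s16 (n := 12) (by simp [W, S]) (by norm_num) A hrank hinf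
  simp only [Fintype.card_sum, Fintype.card_prod, Fintype.card_coe, Fintype.card_fin,
    Fintype.card_unit, hCcard] at hcard
  change _ ≤ maxCDCSize (ZMod 2) 12 4 4 at hcard
  generalize maxCDCSize (ZMod 2) 8 4 4 = M at h hcard
  generalize maxCDCSize (ZMod 2) 12 4 4 = N at hcard ⊢
  omega
end
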